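/- arXiv:1612.03676 — 3 statements merged into one kernel-verified Lean document; each statement's English description precedes it below -/
import Mathlib

section
/- Let w(x) = (x·log(1/x))^{−3/2}, c(x) = x·log(1/x), d ∈ ℝ, and u(t,x) = c(x)·(sin(t·w(x)) + d) for x ∈ (0,1/2). Then there exists a constant C > 0 such that for all h ∈ (0,1/4] and all t ∈ ℝ: ∫₀^{1/2} |u(t+h,x) − u(t,x)|² w(x) dx ≤ C · h · (log(1/h))^{−1}. -/
open MeasureTheory Set

lemma le_of_sq_le_sq_aux {a b : ℝ} (h : a ^ 2 ≤ b ^ 2) (hb : 0 ≤ b) : a ≤ b :=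
  (le_abs_self a).trans (abs_le_of_sq_le_sq h hb)

lemma aux_pt1 {x a L : ℝ} (hx : 0 < x) (hxa : x ≤ a) (hL : 1 ≤ L)
    (ha : Real.log (1 / a) ≤ 5 / 3 * L) : x * Real.log (1 / x) ≤ 4 * (a * L) := by
  have ha0 : 0 < a := hx.trans_le hxa
  have h1 : Real.log (1 / x) = Real.log (1 / a) + Real.log (a / x) := by
    rw [← Real.log_mul (by positivity) (by positivity)]
    congr 1; field_simp
  have h2 : Real.log (a / x) ≤ a / x - 1 := Real.log_le_sub_one_of_pos (by positivity)
  have h3 : x * (a / x) = a := by field_simp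
  have h4 : x * Real.log (1 / x) ≤ x * (5 / 3 * L + a / x) := by
    apply mul_le_mul_of_nonneg_left _ hx.le
    linarith
  have h5 : x * L ≤ a * L := by gcongr
  have h6 : a * 1 ≤ a * L := by gcongr
  rw [mul_add, h3] at h4
  nlinarith

lemma aux_pt2 {x a L y b : ℝ} (hb : 0 < b) (hby : b ≤ y) (hx : x = y ^ 4) (hab : a = b ^ 4)
    (hL : 0 < L) (hx2 : x < 1 / 2)
    (ha : 2 / 3 * L ≤ Real.log (1 / a)) :
    1 / 9 * (L * b ^ 2 * y ^ 2) ≤ x * Real.log (1 / x) := by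
  have hy : 0 < y := hb.trans_le hby
  have hx0 : 0 < x := by rw [hx]; positivity
  have ha0 : 0 < a := by rw [hab]; positivity
  have h1 : Real.log (1 / a) = Real.log (1 / x) + 2 * Real.log (y ^ 2 / b ^ 2) := by
    have : (2:ℝ) * Real.log (y ^ 2 / b ^ 2) = Real.log ((y ^ 2 / b ^ 2) ^ 2) := by
      rw [Real.log_pow]; norm_num
    rw [this, ← Real.log_mul (by positivity) (by positivity)]
    congr 1; rw [hx, hab]; field_simp
  set s := y ^ 2 / b ^ 2 with hs
  have hs1 : 1 ≤ s := by
    rw [hs, le_div_iff₀ (by positivity), one_mul]; gcongr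
  have h2 : Real.log s ≤ s - 1 := Real.log_le_sub_one_of_pos (by positivity)
  have h3 : 1 / 2 ≤ Real.log (1 / x) := by
    have h : Real.log 2 ≤ Real.log (1 / x) := by
      apply Real.log_le_log (by norm_num)
      rw [le_div_iff₀ hx0]; linarith
    linarith [Real.log_two_gt_d9]
  set l := Real.log (1 / x)
  have h4 : 2 / 3 * L ≤ 5 * (l * s) := by nlinarith
  have h5 : L * b ^ 2 * y ^ 2 * (2 / 3) ≤ 5 * (x * l) := by
    calc L * b ^ 2 * y ^ 2 * (2 / 3) = (2 / 3 * L) * (b ^ 2 * y ^ 2) := by ring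
      _ ≤ 5 * (l * s) * (b ^ 2 * y ^ 2) := by gcongr
      _ = 5 * (x * l) := by rw [hs, hx]; field_simp
  have : 0 < x * l := by positivity
  linarith

lemma aux_dom {f g : ℝ → ℝ} {s : Set ℝ} (hs : MeasurableSet s) (hf : Measurable f)
    (hg : IntegrableOn g s) (h0 : ∀ x ∈ s, 0 ≤ f x) (h1 : ∀ x ∈ s, f x ≤ g x) :
    IntegrableOn f s ∧ ∫ x in s, f x ≤ ∫ x in s, g x := by
  have hi : IntegrableOn f s := by
    refine Integrable.mono' hg hf.aestronglyMeasurable ?_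
    filter_upwards [ae_restrict_mem hs] with x hx
    rw [Real.norm_of_nonneg (h0 x hx)]; exact h1 x hx
  exact ⟨hi, setIntegral_mono_on hi hg hs h1⟩

/-- The key increment estimate in the critical-case counterexample: for
`u(t,x) = c(x)(sin(t w(x)) + d)` with `c(x) = x log(1/x)` and `w(x) = (x log(1/x))^{-3/2}`,
there is a constant `C > 0` such that for all `h ∈ (0,1/4]` and all `t ∈ ℝ`,
`∫₀^{1/2} |u(t+h,x) − u(t,x)|² w(x) dx ≤ C h (log(1/h))⁻¹`. -/
theorem critical_counterexample_increment_estimate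
    (d : ℝ) (c w : ℝ → ℝ) (u : ℝ → ℝ → ℝ)
    (hc : ∀ x, c x = x * Real.log (1 / x))
    (hw : ∀ x, w x = (x * Real.log (1 / x)) ^ (-(3 / 2 : ℝ)))
    (hu : ∀ t x, u t x = c x * (Real.sin (t * w x) + d)) :
    ∃ C : ℝ, 0 < C ∧ ∀ h ∈ Ioc (0:ℝ) (1 / 4), ∀ t : ℝ,
      IntegrableOn (fun x : ℝ => |u (t + h) x - u t x| ^ 2 * w x) (Ioo (0:ℝ) (1 / 2)) ∧
      (∫ x in Ioo (0:ℝ) (1 / 2), |u (t + h) x - u t x| ^ 2 * w x) ≤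
        C * h * (Real.log (1 / h))⁻¹ := by
  refine ⟨980, by norm_num, ?_⟩
  rintro h ⟨h0, h4⟩ t
  set f : ℝ → ℝ := fun x : ℝ => |u (t + h) x - u t x| ^ 2 * w x with hf
  have hcm : Measurable c := by
    rw [show c = fun x => x * Real.log (1 / x) from funext hc]; fun_prop
  have hwm : Measurable w := by
    rw [show w = fun x => (x * Real.log (1 / x)) ^ (-(3 / 2 : ℝ)) from funext hw]; fun_prop
  have hfm : Measurable f := by
    simp only [hf, hu]
    have : ∀ z : ℝ, |z| ^ 2 = z ^ 2 := fun z => sq_abs z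
    simp only [this]
    fun_prop
  -- pointwise representation
  have key : ∀ x ∈ Ioo (0:ℝ) (1 / 2), ∃ r D : ℝ, 0 < r ∧ r ^ 2 = x * Real.log (1 / x) ∧
      f x = r * D ^ 2 ∧ D ^ 2 ≤ 4 ∧ D ^ 2 ≤ (h * (r ^ 3)⁻¹) ^ 2 := by
    rintro x ⟨hx0, hx2⟩
    have hl : 0 < Real.log (1 / x) := Real.log_pos (by rw [lt_div_iff₀ hx0]; linarith)
    have hcp : 0 < x * Real.log (1 / x) := by positivity
    set r := Real.sqrt (x * Real.log (1 / x)) with hr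
    have hr0 : 0 < r := Real.sqrt_pos.2 hcp
    have hr2 : r ^ 2 = x * Real.log (1 / x) := Real.sq_sqrt hcp.le
    have hwr : w x = (r ^ 3)⁻¹ := by
      rw [hw, ← hr2, ← Real.rpow_natCast r 2, ← Real.rpow_mul hr0.le, ← Real.rpow_natCast r 3,
        ← Real.rpow_neg hr0.le]
      norm_num
    refine ⟨r, Real.sin ((t + h) * w x) - Real.sin (t * w x), hr0, hr2, ?_, ?_, ?_⟩
    · simp only [hf, hu, sq_abs]
      rw [hc, ← hr2]
      have : ∀ A B : ℝ, (r ^ 2 * (A + d) - r ^ 2 * (B + d)) ^ 2 * w x = r * (A - B) ^ 2 := by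
        intro A B
        rw [hwr]; field_simp; ring
      exact this _ _
    · have a1 := Real.sin_le_one ((t + h) * w x)
      have a2 := Real.neg_one_le_sin ((t + h) * w x)
      have a3 := Real.sin_le_one (t * w x)
      have a4 := Real.neg_one_le_sin (t * w x)
      nlinarith
    · have := Real.lipschitzWith_sin.dist_le_mul ((t + h) * w x) (t * w x)
      rw [Real.dist_eq, Real.dist_eq] at this
      have e : (t + h) * w x - t * w x = h * (r ^ 3)⁻¹ := by rw [← hwr]; ring
      rw [e] at this
      rw [sq_le_sq]
      simpa using this
  set L := Real.log (1 / h) with hLdef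
  have hL1 : 1 ≤ L := by
    have : Real.log 4 ≤ L := by
      apply Real.log_le_log (by norm_num)
      rw [le_div_iff₀ h0]; linarith
    have e : Real.log 4 = 2 * Real.log 2 := by
      rw [show (4:ℝ) = 2 ^ 2 by norm_num, Real.log_pow]; norm_num
    linarith [Real.log_two_gt_d9]
  have hL0 : 0 < L := by linarith
  obtain ⟨q, hq0, hq⟩ : ∃ q : ℝ, 0 < q ∧ q ^ 6 = h :=
    ⟨h ^ ((6:ℝ)⁻¹), by positivity, by
      rw [← Real.rpow_natCast, ← Real.rpow_mul h0.le]; norm_num⟩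
  obtain ⟨l, hl0, hl⟩ : ∃ l : ℝ, 0 < l ∧ l ^ 4 = L :=
    ⟨L ^ ((4:ℝ)⁻¹), by positivity, by
      rw [← Real.rpow_natCast, ← Real.rpow_mul hL0.le]; norm_num⟩
  have hl1 : 1 ≤ l := by
    by_contra hcon
    push Not at hcon
    have := pow_lt_one₀ hl0.le hcon (n := 4) (by norm_num)
    linarith
  set b := q / l with hb
  have hb0 : 0 < b := by positivity
  set a := b ^ 4 with ha
  have ha0 : 0 < a := by positivity
  have hloga : Real.log (1 / a) = 2 / 3 * L + Real.log L := by
    have e1 : L = - (6 * Real.log q) := by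
      rw [hLdef, ← hq, one_div, Real.log_inv, Real.log_pow]; norm_num
    have e2 : Real.log L = 4 * Real.log l := by
      rw [← hl, Real.log_pow]; norm_num
    rw [e2, ha, hb, one_div, Real.log_inv, Real.log_pow, Real.log_div hq0.ne' hl0.ne', e1]
    push_cast; ring
  have hlogL0 : 0 ≤ Real.log L := Real.log_nonneg hL1
  have hlogL1 : Real.log L ≤ L - 1 := Real.log_le_sub_one_of_pos hL0
  have ha2 : a < 1 / 2 := by
    by_contra hcon
    push Not at hcon
    have e1 : a ≤ q ^ 4 := by
      rw [ha]; apply pow_le_pow_left₀ hb0.le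
      exact div_le_self hq0.le hl1
    have e2 : (1/2:ℝ) ^ 3 ≤ (q ^ 4) ^ 3 := by
      apply pow_le_pow_left₀ (by norm_num); linarith
    have e3 : (q ^ 4) ^ 3 = h ^ 2 := by rw [← hq]; ring
    rw [e3] at e2
    nlinarith
  have haL : a * L = q ^ 4 := by rw [ha, hb, ← hl]; field_simp
  -- region 1
  have R1 := aux_dom (f := f) (g := fun _ => 8 * q ^ 2) (s := Ioc 0 a) measurableSet_Ioc hfm
    (integrableOn_const (by simp)) (by
      rintro x ⟨hx, hxa⟩
      obtain ⟨r, D, hr, -, e, -, -⟩ := key x ⟨hx, by linarith⟩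
      rw [e]; positivity) (by
      rintro x ⟨hx, hxa⟩
      obtain ⟨r, D, hr, hr2, e, hD, -⟩ := key x ⟨hx, by linarith⟩
      have := aux_pt1 hx hxa hL1 (by linarith)
      rw [← hr2, haL] at this
      have hr3 : r ≤ 2 * q ^ 2 := by
        refine le_of_sq_le_sq_aux ?_ (by positivity)
        nlinarith
      rw [e]
      calc r * D ^ 2 ≤ 2 * q ^ 2 * 4 := by gcongr
        _ = _ := by ring)
  have gi : IntegrableOn (fun x : ℝ => 243 * q ^ 7 * (l ^ 5)⁻¹ * x ^ (-(5/4) : ℝ)) (Ioi a) :=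
    (integrableOn_Ioi_rpow_of_lt (by norm_num) ha0).const_mul _
  have R2 := aux_dom (f := f) (g := fun x => 243 * q ^ 7 * (l ^ 5)⁻¹ * x ^ (-(5/4) : ℝ))
    (s := Ioo a (1/2)) measurableSet_Ioo hfm
    (gi.mono_set Ioo_subset_Ioi_self) (by
      rintro x ⟨hxa, hx⟩
      obtain ⟨r, D, hr, -, e, -, -⟩ := key x ⟨by linarith, hx⟩
      rw [e]; positivity) (by
      rintro x ⟨hxa, hx⟩
      have hx0 : 0 < x := by linarith
      obtain ⟨r, D, hr, hr2, e, -, hD⟩ := key x ⟨by linarith, hx⟩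
      obtain ⟨y, hy0, hy⟩ : ∃ y : ℝ, 0 < y ∧ y ^ 4 = x :=
        ⟨x ^ ((4:ℝ)⁻¹), by positivity, by
          rw [← Real.rpow_natCast, ← Real.rpow_mul hx0.le]; norm_num⟩
      have hby : b ≤ y := by
        by_contra hcon
        push Not at hcon
        have := pow_lt_pow_left₀ hcon hy0.le (n := 4) (by norm_num)
        linarith
      have h1 := aux_pt2 hb0 hby hy.symm ha hL0 hx (by linarith)
      rw [← hr2] at h1
      have h2 : L * b ^ 2 * y ^ 2 = (q * l * y) ^ 2 := by
        rw [← hl, hb]; field_simp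
      rw [h2] at h1
      have hr3 : q * l * y / 3 ≤ r := by
        refine le_of_sq_le_sq_aux ?_ hr.le
        nlinarith
      have hxy : x ^ (-(5/4) : ℝ) = (y ^ 5)⁻¹ := by
        rw [← hy, ← Real.rpow_natCast y 4, ← Real.rpow_mul hy0.le, ← Real.rpow_natCast y 5,
          ← Real.rpow_neg hy0.le]
        norm_num
      rw [e, hxy]
      calc r * D ^ 2 ≤ r * (h * (r ^ 3)⁻¹) ^ 2 := by gcongr
        _ = h ^ 2 * (r ^ 5)⁻¹ := by field_simp
        _ ≤ h ^ 2 * ((q * l * y / 3) ^ 5)⁻¹ := by gcongr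
        _ = _ := by rw [← hq]; field_simp; norm_num)
  have I1 : ∫ x in Ioc 0 a, (8 * q ^ 2 : ℝ) = 8 * (h * L⁻¹) := by
    rw [setIntegral_const, Measure.real, Real.volume_Ioc, sub_zero,
      ENNReal.toReal_ofReal ha0.le, smul_eq_mul, ha, hb, ← hq, ← hl]
    field_simp
  have I2 : ∫ x in Ioo a (1/2), 243 * q ^ 7 * (l ^ 5)⁻¹ * x ^ (-(5/4) : ℝ)
      ≤ 972 * (h * L⁻¹) := by
    calc _ ≤ ∫ x in Ioi a, 243 * q ^ 7 * (l ^ 5)⁻¹ * x ^ (-(5/4) : ℝ) := by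
          apply setIntegral_mono_set gi
          · filter_upwards [ae_restrict_mem measurableSet_Ioi] with x hx
            have : 0 < x := ha0.trans hx
            simp only [Pi.zero_apply]
            positivity
          · exact Ioo_subset_Ioi_self.eventuallyLE
      _ = 972 * (h * L⁻¹) := by
          rw [integral_const_mul, integral_Ioi_rpow_of_lt (by norm_num) ha0]
          have : a ^ (-(5/4) + 1 : ℝ) = b⁻¹ := by
            rw [ha, ← Real.rpow_natCast b 4, ← Real.rpow_mul hb0.le, ← Real.rpow_neg_one]
            norm_num
          rw [this, hb, ← hq, ← hl]
          field_simp
          norm_num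
  have hU : Ioo (0:ℝ) (1/2) = Ioc 0 a ∪ Ioo a (1/2) :=
    (Ioc_union_Ioo_eq_Ioo ha0.le ha2).symm
  have hdis : Disjoint (Ioc 0 a) (Ioo a (1/2)) := by
    rw [Set.disjoint_left]; rintro x ⟨_, h1⟩ ⟨h2, _⟩; linarith
  rw [hU]
  refine ⟨R1.1.union R2.1, ?_⟩
  rw [setIntegral_union hdis measurableSet_Ioo R1.1 R2.1]
  have := R1.2
  have := R2.2
  linarith
end

section
/- Let w(x) = (x·log(1/x))^{−3/2}, c(x) = x·log(1/x), d ∈ ℝ, T ∈ (0,1/4], and u(t,x) = c(x)·(sin(t·w(x)) + d) for x ∈ (0,1/2). Then for every p ∈ [1,∞) and every q ∈ (2,∞): ∫₀ᵀ ( ∫₀^{T−h} ( ∫₀^{1/2} |u(t+h,x) − u(t,x)|² w(x) dx )^{p/2} dt )^{q/p} h^{−1−q/2} dh < ∞; that is, the function t ↦ u(t,·) belongs to the homogeneous Besov space B^{1/2,p}_q([0,T]; L²((0,1/2), w dx)). -/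
open MeasureTheory Set

/-- upper bound for `x log(1/x)` on `(0,x0]`, where `x0 = h^{2/3}/L`, `L = log (1/h)` -/
lemma aux_upper (h L x0 x : ℝ) (h0 : 0 < h) (hL : L = Real.log (1 / h)) (hL1 : 1 ≤ L)
    (hx0 : x0 = h ^ (2 / 3 : ℝ) / L) (hx : 0 < x) (hxx : x ≤ x0) :
    x * Real.log (1 / x) ≤ 3 * h ^ (2 / 3 : ℝ) := by
  have hLp : 0 < L := by linarith
  have hp : 0 < h ^ (2 / 3 : ℝ) := by positivity
  have hx0p : 0 < x0 := by rw [hx0]; positivity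
  have e1 : Real.log (1 / x) = Real.log (x0 / x) + Real.log (1 / x0) := by
    rw [Real.log_div one_ne_zero hx.ne', Real.log_div hx0p.ne' hx.ne',
      Real.log_div one_ne_zero hx0p.ne']
    simp only [Real.log_one]; ring
  have e2 : Real.log (x0 / x) ≤ x0 / x := (Real.log_le_sub_one_of_pos (by positivity)).trans (by linarith)
  have e3 : Real.log (1 / x0) = 2 / 3 * L + Real.log L := by
    have e0 : Real.log h = -L := by rw [hL, one_div, Real.log_inv]; ring
    rw [one_div, Real.log_inv, hx0, Real.log_div hp.ne' hLp.ne', Real.log_rpow h0, e0]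
    ring
  have e4 : Real.log L ≤ L - 1 := Real.log_le_sub_one_of_pos hLp
  have e5 : 0 ≤ Real.log L := Real.log_nonneg hL1
  have e6 : x0 * L = h ^ (2 / 3 : ℝ) := by rw [hx0]; field_simp
  have e7 : x * (x0 / x) = x0 := by field_simp
  calc x * Real.log (1 / x) ≤ x * (x0 / x + Real.log (1 / x0)) := by
        rw [e1]; gcongr
    _ = x0 + x * (2 / 3 * L + Real.log L) := by rw [mul_add, e7, e3]
    _ ≤ x0 + x0 * (2 / 3 * L + Real.log L) := by gcongr
    _ ≤ x0 * L + x0 * (2 / 3 * L + L) := by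
        have : x0 * (1 + (2 / 3 * L + Real.log L)) ≤ x0 * (L + (2 / 3 * L + L)) := by
          gcongr; linarith
        nlinarith
    _ ≤ 3 * h ^ (2 / 3 : ℝ) := by rw [← e6]; nlinarith

lemma aux_lower (h L x0 x : ℝ) (h0 : 0 < h) (hL : L = Real.log (1 / h)) (hL1 : 1 ≤ L)
    (hx0 : x0 = h ^ (2 / 3 : ℝ) / L) (hx : 0 < x) (hxx : x0 < x) (hx2 : x < 1 / 2) :
    1 / 3 * (x ^ (1 / 2 : ℝ) * h ^ (1 / 3 : ℝ) * L ^ (1 / 2 : ℝ)) ≤ x * Real.log (1 / x) := by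
  have hLp : 0 < L := by linarith
  have hp : 0 < h ^ (2 / 3 : ℝ) := by positivity
  have hx0p : 0 < x0 := by rw [hx0]; positivity
  have ex : x = x ^ (1 / 2 : ℝ) * x ^ (1 / 2 : ℝ) := by
    rw [← Real.rpow_add hx]; norm_num
  have eL : L = L ^ (1 / 2 : ℝ) * L ^ (1 / 2 : ℝ) := by
    rw [← Real.rpow_add hLp]; norm_num
  have key : 1 / 3 * (h ^ (1 / 3 : ℝ) * L ^ (1 / 2 : ℝ)) ≤ x ^ (1 / 2 : ℝ) * Real.log (1 / x) := by
    rcases le_total x (h ^ (1 / 3 : ℝ)) with hc | hc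
    · have e1 : L / 3 ≤ Real.log (1 / x) := by
        have : Real.log x ≤ Real.log (h ^ (1 / 3 : ℝ)) := Real.log_le_log hx hc
        rw [Real.log_rpow h0] at this
        rw [hL]
        simp only [one_div, Real.log_inv] at *
        linarith
      have e2 : h ^ (1 / 3 : ℝ) * L ^ (-(1 / 2) : ℝ) ≤ x ^ (1 / 2 : ℝ) := by
        have : x0 ^ (1 / 2 : ℝ) ≤ x ^ (1 / 2 : ℝ) := by gcongr
        rw [hx0, Real.div_rpow hp.le hLp.le, ← Real.rpow_mul h0.le] at this
        rw [Real.rpow_neg hLp.le, ← div_eq_mul_inv]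
        convert this using 3
        norm_num
      have e3 : L ^ (-(1 / 2) : ℝ) * L = L ^ (1 / 2 : ℝ) := by
        nth_rw 2 [← Real.rpow_one L]
        rw [← Real.rpow_add hLp]; norm_num
      calc 1 / 3 * (h ^ (1 / 3 : ℝ) * L ^ (1 / 2 : ℝ))
          = (h ^ (1 / 3 : ℝ) * L ^ (-(1 / 2) : ℝ)) * (L / 3) := by rw [← e3]; ring
        _ ≤ _ := by gcongr
    · have e1 : 0.69 ≤ Real.log (1 / x) := by
        have : Real.log 2 ≤ Real.log (1 / x) := by
          apply Real.log_le_log (by norm_num)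
          rw [le_div_iff₀ hx]; linarith
        have := Real.log_two_gt_d9
        linarith
      have e2 : h ^ (1 / 6 : ℝ) ≤ x ^ (1 / 2 : ℝ) := by
        have : (h ^ (1 / 3 : ℝ)) ^ (1 / 2 : ℝ) ≤ x ^ (1 / 2 : ℝ) := by gcongr
        rw [← Real.rpow_mul h0.le] at this
        convert this using 2
        norm_num
      have e3 : L ≤ 3 * h ^ (-(1 / 3) : ℝ) := by
        have := Real.log_le_sub_one_of_pos (show 0 < h ^ (-(1 / 3) : ℝ) by positivity)
        rw [Real.log_rpow h0] at this
        rw [hL, one_div, Real.log_inv]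
        linarith
      have e4 : h ^ (1 / 6 : ℝ) * L ^ (1 / 2 : ℝ) ≤ 2 := by
        have h1 : 0 ≤ h ^ (1 / 6 : ℝ) * L ^ (1 / 2 : ℝ) := by positivity
        have h2 : (h ^ (1 / 6 : ℝ) * L ^ (1 / 2 : ℝ)) ^ 2 = h ^ (1 / 3 : ℝ) * L := by
          rw [mul_pow, pow_two, pow_two, ← eL, ← Real.rpow_add h0]; norm_num
        have h3 : h ^ (1 / 3 : ℝ) * L ≤ 3 := by
          calc h ^ (1 / 3 : ℝ) * L ≤ h ^ (1 / 3 : ℝ) * (3 * h ^ (-(1 / 3) : ℝ)) := by gcongr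
            _ = 3 * (h ^ (1 / 3 : ℝ) * h ^ (-(1 / 3) : ℝ)) := by ring
            _ = 3 := by rw [← Real.rpow_add h0]; norm_num
        nlinarith
      have e5 : h ^ (1 / 3 : ℝ) = h ^ (1 / 6 : ℝ) * h ^ (1 / 6 : ℝ) := by
        rw [← Real.rpow_add h0]; norm_num
      have hh : 0 < h ^ (1 / 6 : ℝ) := by positivity
      calc 1 / 3 * (h ^ (1 / 3 : ℝ) * L ^ (1 / 2 : ℝ))
          = h ^ (1 / 6 : ℝ) * (1 / 3 * (h ^ (1 / 6 : ℝ) * L ^ (1 / 2 : ℝ))) := by rw [e5]; ring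
        _ ≤ h ^ (1 / 6 : ℝ) * 0.69 := by gcongr; linarith
        _ ≤ _ := by gcongr
  calc 1 / 3 * (x ^ (1 / 2 : ℝ) * h ^ (1 / 3 : ℝ) * L ^ (1 / 2 : ℝ))
      = x ^ (1 / 2 : ℝ) * (1 / 3 * (h ^ (1 / 3 : ℝ) * L ^ (1 / 2 : ℝ))) := by ring
    _ ≤ x ^ (1 / 2 : ℝ) * (x ^ (1 / 2 : ℝ) * Real.log (1 / x)) := by gcongr
    _ = x * Real.log (1 / x) := by rw [← mul_assoc, ← ex]

lemma aux_one_le_log (h : ℝ) (h0 : 0 < h) (h1 : h < 1 / 4) : 1 ≤ Real.log (1 / h) := by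
  have : Real.log 4 ≤ Real.log (1 / h) := by
    apply Real.log_le_log (by norm_num)
    rw [le_div_iff₀ h0]; linarith
  have h4 : Real.log 4 = 2 * Real.log 2 := by
    rw [show (4:ℝ) = 2 ^ 2 by norm_num, Real.log_pow]; norm_num
  have := Real.log_two_gt_d9
  linarith

/-- pointwise bounds with abstract `C = c x`. -/
lemma aux_point (C a b d h : ℝ) (hC : 0 < C)
    (hab : |a - b| = h * C ^ (-(3 / 2 : ℝ))) :
    |C * (Real.sin a + d) - C * (Real.sin b + d)| ^ 2 * C ^ (-(3 / 2 : ℝ)) ≤ 4 * C ^ (1 / 2 : ℝ) ∧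
    |C * (Real.sin a + d) - C * (Real.sin b + d)| ^ 2 * C ^ (-(3 / 2 : ℝ)) ≤
      h ^ 2 * C ^ (-(5 / 2 : ℝ)) := by
  have e : |C * (Real.sin a + d) - C * (Real.sin b + d)| ^ 2 * C ^ (-(3 / 2 : ℝ))
      = C ^ (1 / 2 : ℝ) * (Real.sin a - Real.sin b) ^ 2 := by
    rw [sq_abs]
    have : C ^ (1 / 2 : ℝ) = C ^ 2 * C ^ (-(3 / 2 : ℝ)) := by
      rw [← Real.rpow_natCast, ← Real.rpow_add hC]; norm_num
    rw [this]; ring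
  have hs : |Real.sin a - Real.sin b| ≤ |a - b| := by
    have := Real.lipschitzWith_sin.dist_le_mul a b
    simpa [Real.dist_eq] using this
  rw [e]
  constructor
  · have : (Real.sin a - Real.sin b) ^ 2 ≤ 4 := by
      have := Real.sin_le_one a; have := Real.neg_one_le_sin a
      have := Real.sin_le_one b; have := Real.neg_one_le_sin b
      nlinarith
    have hp : 0 < C ^ (1 / 2 : ℝ) := by positivity
    nlinarith
  · have h2 : (Real.sin a - Real.sin b) ^ 2 ≤ (h * C ^ (-(3 / 2 : ℝ))) ^ 2 := by
      rw [← hab, sq_le_sq, abs_abs]; exact hs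
    have e3 : C ^ (-(5 / 2 : ℝ)) = C ^ (1 / 2 : ℝ) * (C ^ (-(3 / 2 : ℝ))) ^ 2 := by
      rw [← Real.rpow_natCast, ← Real.rpow_mul hC.le, ← Real.rpow_add hC]; norm_num
    calc C ^ (1 / 2 : ℝ) * (Real.sin a - Real.sin b) ^ 2
        ≤ C ^ (1 / 2 : ℝ) * (h * C ^ (-(3 / 2 : ℝ))) ^ 2 := by gcongr
      _ = _ := by rw [e3]; ring

/-- the spatial estimate -/
lemma aux_F : ∃ K : ℝ, 0 < K ∧ ∀ (d t h : ℝ), 0 < h → h < 1 / 4 →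
    (∫ x in Ioo (0:ℝ) (1 / 2),
      |x * Real.log (1 / x) *
          (Real.sin ((t + h) * (x * Real.log (1 / x)) ^ (-(3 / 2 : ℝ))) + d) -
        x * Real.log (1 / x) *
          (Real.sin (t * (x * Real.log (1 / x)) ^ (-(3 / 2 : ℝ))) + d)| ^ 2 *
        (x * Real.log (1 / x)) ^ (-(3 / 2 : ℝ))) ≤ K * (h / Real.log (1 / h)) := by
  refine ⟨8 + 4 * (1 / 3 : ℝ) ^ (-(5 / 2 : ℝ)), by positivity, ?_⟩
  intro d t h h0 h1
  have hL1 := aux_one_le_log h h0 h1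
  obtain ⟨L, hL⟩ : ∃ L, L = Real.log (1 / h) := ⟨_, rfl⟩
  rw [← hL] at hL1 ⊢
  have hLp : 0 < L := by linarith
  obtain ⟨x0, hx0⟩ : ∃ x0, x0 = h ^ (2 / 3 : ℝ) / L := ⟨_, rfl⟩
  have hx0p : 0 < x0 := by rw [hx0]; positivity
  set B : ℝ := h ^ 2 * ((1 / 3 : ℝ) ^ (-(5 / 2 : ℝ)) * h ^ (-(5 / 6) : ℝ) * L ^ (-(5 / 4) : ℝ)) with hB
  have hBp : 0 ≤ B := by positivity
  set g1 : ℝ → ℝ := (Ioc (0:ℝ) x0).indicator (fun _ => 8 * h ^ (1 / 3 : ℝ)) with hg1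
  set g2 : ℝ → ℝ := (Ioi x0).indicator (fun x => B * x ^ (-(5 / 4) : ℝ)) with hg2
  have g1i : Integrable g1 := by
    rw [hg1, integrable_indicator_iff measurableSet_Ioc]
    exact integrableOn_const (by simp)
  have g2i : Integrable g2 := by
    rw [hg2, integrable_indicator_iff measurableSet_Ioi]
    exact (integrableOn_Ioi_rpow_of_lt (by norm_num) hx0p).const_mul _
  have g1n : ∀ x, 0 ≤ g1 x := fun x => indicator_nonneg (fun _ _ => by positivity) x
  have g2n : ∀ x, 0 ≤ g2 x := by
    intro x
    refine indicator_nonneg (fun y hy => ?_) x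
    have : 0 < y := hx0p.trans hy
    positivity
  have I1 : ∫ x, g1 x = 8 * (h / L) := by
    rw [hg1, integral_indicator measurableSet_Ioc, setIntegral_const]
    simp only [Real.volume_real_Ioc_of_le hx0p.le, smul_eq_mul, sub_zero]
    have : h = h ^ (2 / 3 : ℝ) * h ^ (1 / 3 : ℝ) := by rw [← Real.rpow_add h0]; norm_num
    nth_rw 2 [this]
    rw [hx0]; ring
  have I2 : ∫ x, g2 x = 4 * (1 / 3 : ℝ) ^ (-(5 / 2 : ℝ)) * (h / L) := by
    rw [hg2, integral_indicator measurableSet_Ioi, integral_const_mul,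
      integral_Ioi_rpow_of_lt (by norm_num) hx0p]
    have e1 : x0 ^ (-(5 / 4) + 1 : ℝ) = h ^ (-(1 / 6) : ℝ) * L ^ (1 / 4 : ℝ) := by
      rw [hx0, Real.div_rpow (by positivity) hLp.le, ← Real.rpow_mul h0.le, div_eq_mul_inv,
        ← Real.rpow_neg hLp.le]
      norm_num
    have e2 : h ^ 2 * h ^ (-(5 / 6) : ℝ) * h ^ (-(1 / 6) : ℝ) = h := by
      rw [← Real.rpow_natCast, ← Real.rpow_add h0, ← Real.rpow_add h0]; norm_num
    have e3 : L ^ (-(5 / 4) : ℝ) * L ^ (1 / 4 : ℝ) = L⁻¹ := by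
      rw [← Real.rpow_add hLp, ← Real.rpow_neg_one]; norm_num
    rw [e1, hB, div_eq_mul_inv h L, ← e3]
    nth_rw 4 [← e2]
    ring
  have hfn : ∀ x ∈ Ioo (0:ℝ) (1 / 2), 0 < x * Real.log (1 / x) := by
    intro x hx
    apply mul_pos hx.1
    apply Real.log_pos
    rw [lt_div_iff₀ hx.1]; linarith [hx.2]
  calc _ ≤ ∫ x in Ioo (0:ℝ) (1 / 2), (g1 x + g2 x) := by
        apply integral_mono_of_nonneg
        · filter_upwards [ae_restrict_mem measurableSet_Ioo] with x hx
          have := hfn x hx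
          positivity
        · exact (g1i.add g2i).integrableOn
        · filter_upwards [ae_restrict_mem measurableSet_Ioo] with x hx
          have hC := hfn x hx
          have hpt := aux_point (x * Real.log (1 / x))
            ((t + h) * (x * Real.log (1 / x)) ^ (-(3 / 2 : ℝ)))
            (t * (x * Real.log (1 / x)) ^ (-(3 / 2 : ℝ))) d h hC (by
              rw [← sub_mul, add_sub_cancel_left, abs_of_pos (by positivity)])
          rcases le_or_gt x x0 with hxx | hxx
          · have := aux_upper h L x0 x h0 hL hL1 hx0 hx.1 hxx
            have hg : g1 x = 8 * h ^ (1 / 3 : ℝ) :=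
              indicator_of_mem (show x ∈ Ioc (0:ℝ) x0 from ⟨hx.1, hxx⟩) _
            refine hpt.1.trans ?_
            have h2 : (x * Real.log (1 / x)) ^ (1 / 2 : ℝ) ≤ 2 * h ^ (1 / 3 : ℝ) := by
              calc (x * Real.log (1 / x)) ^ (1 / 2 : ℝ)
                  ≤ (2 ^ 2 * h ^ (2 / 3 : ℝ)) ^ (1 / 2 : ℝ) := by
                    apply Real.rpow_le_rpow hC.le _ (by norm_num)
                    have : 0 < h ^ (2 / 3 : ℝ) := by positivity
                    linarith
                _ = 2 * h ^ (1 / 3 : ℝ) := by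
                    rw [Real.mul_rpow (by norm_num) (by positivity), ← Real.rpow_mul h0.le,
                      ← Real.rpow_natCast, ← Real.rpow_mul (by norm_num)]
                    norm_num
            have := g2n x
            rw [hg]; linarith
          · have hlow := aux_lower h L x0 x h0 hL hL1 hx0 hx.1 hxx hx.2
            have hx' := hx.1
            have hg : g2 x = B * x ^ (-(5 / 4) : ℝ) := indicator_of_mem hxx _
            refine hpt.2.trans ?_
            have h2 : (x * Real.log (1 / x)) ^ (-(5 / 2) : ℝ) ≤
                (1 / 3 * (x ^ (1 / 2 : ℝ) * h ^ (1 / 3 : ℝ) * L ^ (1 / 2 : ℝ))) ^ (-(5 / 2) : ℝ) :=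
              Real.rpow_le_rpow_of_nonpos (by positivity) hlow (by norm_num)
            have h3 : (1 / 3 * (x ^ (1 / 2 : ℝ) * h ^ (1 / 3 : ℝ) * L ^ (1 / 2 : ℝ))) ^ (-(5 / 2) : ℝ)
              = (1 / 3 : ℝ) ^ (-(5 / 2) : ℝ) * (x ^ (-(5 / 4) : ℝ) * h ^ (-(5 / 6) : ℝ) * L ^ (-(5 / 4) : ℝ)) := by
              rw [Real.mul_rpow (by positivity) (by positivity),
                Real.mul_rpow (by positivity) (by positivity),
                Real.mul_rpow (by positivity) (by positivity),
                ← Real.rpow_mul hx'.le, ← Real.rpow_mul h0.le, ← Real.rpow_mul hLp.le]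
              norm_num
            rw [h3] at h2
            have := g1n x
            have h4 := mul_le_mul_of_nonneg_left h2 (sq_nonneg h)
            rw [hg, hB]
            linarith
    _ ≤ ∫ x, (g1 x + g2 x) := by
        apply setIntegral_le_integral (g1i.add g2i)
        exact Filter.Eventually.of_forall (fun x => add_nonneg (g1n x) (g2n x))
    _ = _ := by rw [integral_add g1i g2i, I1, I2]; ring

lemma aux_int (q T : ℝ) (hq : 2 < q) (hT : T ∈ Ioc (0:ℝ) (1 / 4)) :
    IntegrableOn (fun h : ℝ => h⁻¹ * Real.log (1 / h) ^ (-(q / 2))) (Ioo 0 T) := by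
  have key : IntegrableOn (fun h : ℝ => (q / 2 - 1) * (h⁻¹ * Real.log (1 / h) ^ (-(q / 2))))
      (Ioc 0 T) := by
    apply intervalIntegral.integrableOn_deriv_of_nonneg
      (g := fun h : ℝ => Real.log (1 / h) ^ (1 - q / 2))
    · intro h hh
      rcases hh.1.eq_or_lt with h0 | h0
      · subst h0
        have ez : Real.log (1 / (0:ℝ)) ^ (1 - q / 2) = 0 := by
          simp; rw [Real.zero_rpow]; linarith
        have t1 : Filter.Tendsto (fun h : ℝ => Real.log (1 / h)) (nhdsWithin 0 (Ioi 0))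
            Filter.atTop := by
          simp only [one_div, Real.log_inv]
          exact Filter.tendsto_neg_atBot_atTop.comp Real.tendsto_log_nhdsGT_zero
        have t2 := (tendsto_rpow_neg_atTop (show 0 < q / 2 - 1 by linarith)).comp t1
        have t3 : ContinuousWithinAt (fun h : ℝ => Real.log (1 / h) ^ (1 - q / 2)) (Ioi 0) 0 := by
          unfold ContinuousWithinAt
          change Filter.Tendsto _ _ (nhds (Real.log (1 / (0:ℝ)) ^ (1 - q / 2)))
          rw [ez]
          convert t2 using 2 with y
          simp [Function.comp]
        have t4 := (continuousWithinAt_insert_self (x := (0:ℝ))).2 t3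
        refine t4.mono ?_
        intro y hy
        rcases hy.1.eq_or_lt with h | h
        · exact Or.inl h.symm
        · exact Or.inr h
      · apply ContinuousAt.continuousWithinAt
        have hlog : 0 < Real.log (1 / h) := by
          apply Real.log_pos
          rw [lt_div_iff₀ h0]; linarith [hh.2, hT.2]
        refine ContinuousAt.rpow_const (f := fun h : ℝ => Real.log (1 / h)) ?_ (Or.inl hlog.ne')
        apply ContinuousAt.log _ (by positivity)
        exact continuousAt_const.div continuousAt_id h0.ne'
    · intro h hh
      have h0 := hh.1
      have hlog : 0 < Real.log (1 / h) := by
        apply Real.log_pos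
        rw [lt_div_iff₀ h0]; linarith [hh.2, hT.2]
      have d1 : HasDerivAt (fun h : ℝ => Real.log (1 / h)) (-h⁻¹) h := by
        simp only [one_div, Real.log_inv]
        exact (Real.hasDerivAt_log h0.ne').neg
      have d2 := d1.rpow_const (p := 1 - q / 2) (Or.inl hlog.ne')
      convert d2 using 1
      rw [show 1 - q / 2 - 1 = -(q / 2) by ring]; ring
    · intro h hh
      have h0 := hh.1
      have hlog : 0 < Real.log (1 / h) := by
        apply Real.log_pos
        rw [lt_div_iff₀ h0]; linarith [hh.2, hT.2]
      have : 0 < q / 2 - 1 := by linarith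
      positivity
  have k2 : IntegrableOn _ (Ioo 0 T) := (key.mono_set Ioo_subset_Ioc_self).const_mul (q / 2 - 1)⁻¹
  have : q / 2 - 1 ≠ 0 := by intro h; linarith
  refine k2.congr_fun ?_ measurableSet_Ioo
  intro h _
  simp only
  rw [← mul_assoc, inv_mul_cancel₀ this, one_mul]

/-- The function `t ↦ u(t,·)`, with `u(t,x) = c(x)(sin(t w(x)) + d)`, `c(x) = x log(1/x)`
and weight `w(x) = (x log(1/x))^{-3/2}`, belongs to the homogeneous Besov space
`B^{1/2,p}_q([0,T]; L²((0,1/2), w dx))` for every `p ∈ [1,∞)` and `q ∈ (2,∞)`: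
the Besov integral
`∫₀ᵀ (∫₀^{T-h} (∫₀^{1/2} |u(t+h,x) − u(t,x)|² w(x) dx)^{p/2} dt)^{q/p} h^{-1-q/2} dh`
is finite. -/
theorem critical_counterexample_besov_regularity
    (d : ℝ) (c w : ℝ → ℝ) (u : ℝ → ℝ → ℝ)
    (hc : ∀ x, c x = x * Real.log (1 / x))
    (hw : ∀ x, w x = (x * Real.log (1 / x)) ^ (-(3 / 2 : ℝ)))
    (hu : ∀ t x, u t x = c x * (Real.sin (t * w x) + d))
    (T : ℝ) (hT : T ∈ Ioc (0:ℝ) (1 / 4))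
    (p q : ℝ) (hp : 1 ≤ p) (hq : 2 < q) :
    IntegrableOn
      (fun h : ℝ =>
        (∫ t in Ioo (0:ℝ) (T - h),
            (∫ x in Ioo (0:ℝ) (1 / 2), |u (t + h) x - u t x| ^ 2 * w x) ^ (p / 2)) ^ (q / p) *
          h ^ (-1 - q / 2))
      (Ioo (0:ℝ) T) := by
  obtain ⟨K, hK, hF⟩ := aux_F
  have hFb : ∀ t h : ℝ, 0 < h → h < 1 / 4 →
      (∫ x in Ioo (0:ℝ) (1 / 2), |u (t + h) x - u t x| ^ 2 * w x) ≤ K * (h / Real.log (1 / h)) := by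
    intro t h h0 h1
    have := hF d t h h0 h1
    simpa only [hu, hc, hw] using this
  have hFn : ∀ t h : ℝ,
      0 ≤ (∫ x in Ioo (0:ℝ) (1 / 2), |u (t + h) x - u t x| ^ 2 * w x) := by
    intro t h
    apply setIntegral_nonneg measurableSet_Ioo
    intro x hx
    have : 0 < x * Real.log (1 / x) := by
      apply mul_pos hx.1
      apply Real.log_pos
      rw [lt_div_iff₀ hx.1]; linarith [hx.2]
    rw [hw]
    positivity
  have hmeas : Measurable (fun h : ℝ => ∫ t in Ioo (0:ℝ) (T - h),
      (∫ x in Ioo (0:ℝ) (1 / 2), |u (t + h) x - u t x| ^ 2 * w x) ^ (p / 2)) := by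
    have hcm : Measurable c := by
      rw [show c = fun x => x * Real.log (1 / x) from funext hc]; fun_prop
    have hwm : Measurable w := by
      rw [show w = fun x => (x * Real.log (1 / x)) ^ (-(3 / 2 : ℝ)) from funext hw]; fun_prop
    have m1 : Measurable (fun z : (ℝ × ℝ) × ℝ =>
        |u (z.1.2 + z.1.1) z.2 - u z.1.2 z.2| ^ 2 * w z.2) := by
      simp only [hu]; fun_prop
    have m2 : StronglyMeasurable (fun z : ℝ × ℝ =>
        ∫ x in Ioo (0:ℝ) (1 / 2), |u (z.2 + z.1) x - u z.2 x| ^ 2 * w x) :=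
      m1.stronglyMeasurable.integral_prod_right' (ν := volume.restrict (Ioo (0:ℝ) (1 / 2)))
    have m3 : Measurable (fun z : ℝ × ℝ => ({z : ℝ × ℝ | 0 < z.2 ∧ z.2 < T - z.1}).indicator
        (fun z : ℝ × ℝ =>
        (∫ x in Ioo (0:ℝ) (1 / 2), |u (z.2 + z.1) x - u z.2 x| ^ 2 * w x) ^ (p / 2)) z) := by
      apply Measurable.indicator
      · exact m2.measurable.pow_const _
      · exact (measurableSet_lt measurable_const measurable_snd).inter
          (measurableSet_lt measurable_snd (measurable_const.sub measurable_fst))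
    have m4 := (m3.stronglyMeasurable.integral_prod_right' (ν := (volume : Measure ℝ))).measurable
    convert m4 using 2 with h
    rw [← integral_indicator measurableSet_Ioo]
    rfl
  have hdom := (aux_int q T hq hT).const_mul (K ^ (q / 2))
  refine hdom.mono' ?_ ?_
  · exact ((hmeas.pow_const _).mul (measurable_id.pow_const _)).aestronglyMeasurable
  · filter_upwards [ae_restrict_mem measurableSet_Ioo] with h hh
    have h0 := hh.1
    have h1 : h < 1 / 4 := lt_of_lt_of_le hh.2 hT.2
    have hL1 := aux_one_le_log h h0 h1
    set L := Real.log (1 / h) with hL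
    have hLp : 0 < L := by linarith
    set G := K * (h / L) with hG
    have hGp : 0 < G := by positivity
    set J := ∫ t in Ioo (0:ℝ) (T - h),
      (∫ x in Ioo (0:ℝ) (1 / 2), |u (t + h) x - u t x| ^ 2 * w x) ^ (p / 2) with hJ
    have hJ0 : 0 ≤ J := by
      apply integral_nonneg
      intro t
      exact Real.rpow_nonneg (hFn t h) _
    have hJ1 : J ≤ G ^ (p / 2) := by
      calc J ≤ ∫ t in Ioo (0:ℝ) (T - h), G ^ (p / 2) := by
            apply integral_mono_of_nonneg
            · exact Filter.Eventually.of_forall (fun t => Real.rpow_nonneg (hFn t h) _)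
            · exact integrableOn_const (by simp)
            · exact Filter.Eventually.of_forall
                (fun t => Real.rpow_le_rpow (hFn t h) (hFb t h h0 h1) (by linarith))
        _ = (T - h) * G ^ (p / 2) := by
            rw [setIntegral_const, Real.volume_real_Ioo_of_le (by linarith [hh.2])]
            simp
        _ ≤ 1 * G ^ (p / 2) := by
            gcongr
            linarith [hT.2]
        _ = _ := one_mul _
    have hJ2 : J ^ (q / p) ≤ G ^ (q / 2) := by
      have hp0 : 0 < p := by linarith
      calc J ^ (q / p) ≤ (G ^ (p / 2)) ^ (q / p) :=
            Real.rpow_le_rpow hJ0 hJ1 (div_nonneg (by linarith) hp0.le)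
        _ = G ^ (q / 2) := by
            rw [← Real.rpow_mul hGp.le]; congr 1; field_simp
    rw [Real.norm_of_nonneg (mul_nonneg (Real.rpow_nonneg hJ0 _) (Real.rpow_nonneg h0.le _))]
    calc J ^ (q / p) * h ^ (-1 - q / 2) ≤ G ^ (q / 2) * h ^ (-1 - q / 2) := by gcongr
      _ = K ^ (q / 2) * (h⁻¹ * L ^ (-(q / 2))) := by
        rw [hG, Real.mul_rpow hK.le (by positivity), Real.div_rpow h0.le hLp.le,
          Real.rpow_neg hLp.le, ← Real.rpow_neg_one h]
        have : h ^ (-1 : ℝ) = h ^ (q / 2) * h ^ (-1 - q / 2) := by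
          rw [← Real.rpow_add h0]; congr 1; ring
        rw [this]; ring
end

section
/- Let E be a normed space, b, c ∈ E, and define the step function f : (0,2) → E by f(t) = b for t ∈ (0,1) and f(t) = c for t ∈ [1,2). Then for all s ∈ (0,1) and p, q ∈ [1,∞) with s < 1/p: ∫₀^∞ ( h^{−s} ( ∫_{I_h} ‖f(t+h) − f(t)‖_E^p dt )^{1/p} )^q dh/h < ∞, where I_h = { t ∈ (0,2) : t + h ∈ (0,2) }. That is, step functions belong to the homogeneous Besov space B^{s,p}_q((0,2);E) whenever the Sobolev index s − 1/p is negative. -/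
open MeasureTheory Set

theorem step_inner_aux {E : Type*} [NormedAddCommGroup E] [NormedSpace ℝ E]
    (b c : E) (f : ℝ → E)
    (hfb : ∀ t ∈ Ioo (0:ℝ) 1, f t = b)
    (hfc : ∀ t ∈ Ico (1:ℝ) 2, f t = c) (p : ℝ) (hp : 1 ≤ p) (h : ℝ) (hh : 0 < h) :
    (∫ t in {t : ℝ | t ∈ Ioo (0:ℝ) 2 ∧ t + h ∈ Ioo (0:ℝ) 2}, ‖f (t + h) - f t‖ ^ p)
      = max (min 1 (2 - h) - max 0 (1 - h)) 0 * ‖c - b‖ ^ p := by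
  have hS : MeasurableSet {t : ℝ | t ∈ Ioo (0:ℝ) 2 ∧ t + h ∈ Ioo (0:ℝ) 2} :=
    measurableSet_Ioo.inter (measurableSet_Ioo.preimage (by fun_prop))
  have hT : MeasurableSet (Ioo (0:ℝ) 1 ∩ Ico (1 - h) (2 - h)) :=
    measurableSet_Ioo.inter measurableSet_Ico
  have h1 : EqOn (fun t => ‖f (t + h) - f t‖ ^ p)
      ((Ioo (0:ℝ) 1 ∩ Ico (1 - h) (2 - h)).indicator (fun _ => ‖c - b‖ ^ p))
      {t : ℝ | t ∈ Ioo (0:ℝ) 2 ∧ t + h ∈ Ioo (0:ℝ) 2} := by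
    rintro t ⟨⟨ht0, ht2⟩, hh0, hh2⟩
    have h0 : (0:ℝ) ^ p = 0 := Real.zero_rpow (by linarith)
    by_cases ht : t < 1
    · by_cases hth : 1 ≤ t + h
      · have hm : t ∈ Ioo (0:ℝ) 1 ∩ Ico (1 - h) (2 - h) :=
          ⟨⟨ht0, ht⟩, by linarith, by linarith⟩
        simp only [indicator_of_mem hm]
        rw [hfb t ⟨ht0, ht⟩, hfc _ ⟨hth, hh2⟩]
      · have hm : t ∉ Ioo (0:ℝ) 1 ∩ Ico (1 - h) (2 - h) := by
          rintro ⟨_, h3, _⟩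
          linarith
        simp only [indicator_of_notMem hm]
        rw [hfb t ⟨ht0, ht⟩, hfb _ ⟨hh0, not_le.mp hth⟩, sub_self, norm_zero, h0]
    · have hm : t ∉ Ioo (0:ℝ) 1 ∩ Ico (1 - h) (2 - h) := by
        rintro ⟨⟨_, h3⟩, _⟩
        linarith
      simp only [indicator_of_notMem hm]
      rw [hfc t ⟨not_lt.mp ht, ht2⟩, hfc _ ⟨by linarith, hh2⟩, sub_self, norm_zero, h0]
  rw [setIntegral_congr_fun hS h1, setIntegral_indicator hT, setIntegral_const]
  have h2 : {t : ℝ | t ∈ Ioo (0:ℝ) 2 ∧ t + h ∈ Ioo (0:ℝ) 2} ∩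
      (Ioo (0:ℝ) 1 ∩ Ico (1 - h) (2 - h)) = Ioo (0:ℝ) 1 ∩ Ico (1 - h) (2 - h) := by
    apply inter_eq_right.mpr
    rintro t ⟨⟨h3, h4⟩, h5, h6⟩
    exact ⟨⟨h3, by linarith⟩, by linarith, by linarith⟩
  have h3 : (Ioo (0:ℝ) 1 ∩ Ico (1 - h) (2 - h) : Set ℝ) =ᵐ[volume]
      (Ico (0:ℝ) 1 ∩ Ico (1 - h) (2 - h) : Set ℝ) :=
    Ioo_ae_eq_Ico.inter (ae_eq_refl _)
  rw [h2, measureReal_congr h3, Ico_inter_Ico, Real.volume_real_Ico, smul_eq_mul]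

/-- Step functions belong to the homogeneous Besov space `B^{s,p}_q((0,2);E)` whenever the
Sobolev index `s − 1/p` is negative: for `f = b` on `(0,1)` and `f = c` on `[1,2)`, the Besov
integral `∫₀^∞ (h^{-s} (∫_{I_h} ‖f(t+h) − f(t)‖^p dt)^{1/p})^q dh/h` is finite for all
`s ∈ (0,1)` and `p, q ∈ [1,∞)` with `s < 1/p`, where `I_h = {t ∈ (0,2) : t + h ∈ (0,2)}`. -/
theorem step_function_mem_besov
    {E : Type*} [NormedAddCommGroup E] [NormedSpace ℝ E]
    (b c : E) (f : ℝ → E)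
    (hfb : ∀ t ∈ Ioo (0:ℝ) 1, f t = b)
    (hfc : ∀ t ∈ Ico (1:ℝ) 2, f t = c) :
    ∀ s : ℝ, 0 < s → s < 1 → ∀ p q : ℝ, 1 ≤ p → 1 ≤ q → s < 1 / p →
      IntegrableOn
        (fun h : ℝ =>
          (h ^ (-s) *
              (∫ t in {t : ℝ | t ∈ Ioo (0:ℝ) 2 ∧ t + h ∈ Ioo (0:ℝ) 2},
                  ‖f (t + h) - f t‖ ^ p) ^ (1 / p)) ^ q * h⁻¹)
        (Ioi (0:ℝ)) := by
  intro s hs0 hs1 p q hp hq hsp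
  have hp0 : 0 < p := by linarith
  have hq0 : 0 < q := by linarith
  have key : IntegrableOn (fun h : ℝ => (h ^ (-s) *
      (max (min 1 (2 - h) - max 0 (1 - h)) 0 * ‖c - b‖ ^ p) ^ (1 / p)) ^ q * h⁻¹)
      (Ioi (0:ℝ)) := by
    have hdom : IntegrableOn (fun h : ℝ => ‖c - b‖ ^ q * h ^ ((1 / p - s) * q - 1))
        (Ioo (0:ℝ) 2) := by
      refine Integrable.const_mul ?_ _
      have : -1 < (1 / p - s) * q - 1 := by
        have := mul_pos (sub_pos.mpr hsp) hq0
        linarith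
      exact (intervalIntegral.integrableOn_Ioo_rpow_iff (by norm_num)).mpr this
    have h02 : IntegrableOn (fun h : ℝ => (h ^ (-s) *
      (max (min 1 (2 - h) - max 0 (1 - h)) 0 * ‖c - b‖ ^ p) ^ (1 / p)) ^ q * h⁻¹)
      (Ioo (0:ℝ) 2) := by
      refine Integrable.mono' hdom (Measurable.aestronglyMeasurable (by fun_prop)) ?_
      refine (ae_restrict_iff' measurableSet_Ioo).mpr (Filter.Eventually.of_forall ?_)
      rintro h ⟨hh0, hh2⟩
      have hb : max (min 1 (2 - h) - max 0 (1 - h)) 0 ≤ h := by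
        refine max_le ?_ hh0.le
        have := min_le_left 1 (2 - h)
        have := le_max_right 0 (1 - h)
        linarith
      have hb0 : 0 ≤ max (min 1 (2 - h) - max 0 (1 - h)) 0 := le_max_right _ _
      generalize max (min 1 (2 - h) - max 0 (1 - h)) 0 = m at hb hb0
      rw [Real.norm_of_nonneg (by positivity)]
      calc (h ^ (-s) * (m * ‖c - b‖ ^ p) ^ (1 / p)) ^ q * h⁻¹
          ≤ (h ^ (-s) * (h * ‖c - b‖ ^ p) ^ (1 / p)) ^ q * h⁻¹ := by gcongr
        _ = ‖c - b‖ ^ q * h ^ ((1 / p - s) * q - 1) := by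
          rw [Real.mul_rpow hh0.le (by positivity), ← Real.rpow_mul (norm_nonneg _),
            mul_one_div_cancel hp0.ne', Real.rpow_one, ← mul_assoc, ← Real.rpow_add hh0,
            Real.mul_rpow (by positivity) (norm_nonneg _), ← Real.rpow_mul hh0.le,
            Real.rpow_sub_one hh0.ne']
          rw [show -s + 1 / p = 1 / p - s by ring]
          ring
    have h2 : IntegrableOn (fun h : ℝ => (h ^ (-s) *
      (max (min 1 (2 - h) - max 0 (1 - h)) 0 * ‖c - b‖ ^ p) ^ (1 / p)) ^ q * h⁻¹)
      (Ici (2:ℝ)) := by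
      refine (integrableOn_zero (ε' := ℝ)).congr_fun ?_ measurableSet_Ici
      intro h hh
      have hh : 2 ≤ h := hh
      have hz : max (min 1 (2 - h) - max 0 (1 - h)) 0 = 0 := by
        apply max_eq_right
        have := min_le_right 1 (2 - h)
        have := le_max_left 0 (1 - h)
        linarith
      have hp1 : 1 / p ≠ 0 := by positivity
      simp only [hz, zero_mul, Real.zero_rpow hp1, mul_zero, Real.zero_rpow hq0.ne']
    rw [← Ioo_union_Ici_eq_Ioi (show (0:ℝ) < 2 by norm_num)]
    exact h02.union h2
  refine key.congr_fun ?_ measurableSet_Ioi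
  intro h hh
  simp only [step_inner_aux b c f hfb hfc p hp h hh]
end
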